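/- Let a, b, c be pairwise coprime positive integers with c² = a² + b² + ab, and let m be a positive integer such that the equilateral triangle with side length m·ab tiles into m²·ab congruent copies of the triangle with side lengths (a, b, c). Then the triangle with side lengths (m·a·c, m·b·(b+2a), m·c·(a+b)) tiles into m²·(b+2a)·(a+b) congruent copies of the triangle with side lengths (a, b, c). -/

import Mathlib

noncomputable section

abbrev Plane := EuclideanSpace ℝ (Fin 2)

/-- The point (x, y) in the Euclidean plane. -/
def pt (x y : ℝ) : Plane := (WithLp.equiv 2 (Fin 2 → ℝ)).symm ![x, y]

/-- `Δ` is a triangle with side lengths `(p, q, r)`: the convex hull of points `P, Q, R`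
with `dist Q R = p`, `dist P R = q`, `dist P Q = r`. -/
def IsTriangle (p q r : ℝ) (Δ : Set Plane) : Prop :=
  ∃ P Q R : Plane, dist Q R = p ∧ dist P R = q ∧ dist P Q = r ∧
    Δ = convexHull ℝ {P, Q, R}

/-- `S` tiles into `N` congruent copies of the `(p, q, r)` triangle: there are isometries
`f 1, …, f N` of the plane and a triangle `Δ` with side lengths `(p, q, r)` such that
`S` is the union of the `f i '' Δ` and their interiors are pairwise disjoint. -/
def TilesInto (S : Set Plane) (N : ℕ) (p q r : ℝ) : Prop :=
  ∃ (f : Fin N → Plane ≃ᵢ Plane) (Δ : Set Plane),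
    IsTriangle p q r Δ ∧
    S = ⋃ i, f i '' Δ ∧
    ∀ i j : Fin N, i ≠ j → interior (f i '' Δ) ∩ interior (f j '' Δ) = ∅

/-- The equilateral triangle with side length `X`. -/
def EquilateralTri (X : ℝ) : Set Plane :=
  convexHull ℝ {pt 0 0, pt X 0, pt (X/2) (X * Real.sqrt 3 / 2)}

theorem plane_image_convexHull (g : Plane ≃ᵢ Plane) (s : Set Plane) :
    g '' convexHull ℝ s = convexHull ℝ (g '' s) := by
  have h := AffineMap.image_convexHull
    (g.toRealAffineIsometryEquiv.toAffineEquiv.toAffineMap : Plane →ᵃ[ℝ] Plane) s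
  have e : ⇑(g.toRealAffineIsometryEquiv.toAffineEquiv.toAffineMap : Plane →ᵃ[ℝ] Plane) = g := by
    ext1 x
    exact congrFun (IsometryEquiv.coeFn_toRealAffineIsometryEquiv g) x
  rwa [e] at h

theorem sss (P Q R P' Q' R' : Plane)
    (hdet : (Q 0 - P 0) * (R 1 - P 1) - (Q 1 - P 1) * (R 0 - P 0) ≠ 0)
    (h1 : dist Q R = dist Q' R') (h2 : dist P R = dist P' R') (h3 : dist P Q = dist P' Q') :
    ∃ g : Plane ≃ᵢ Plane, g P = P' ∧ g Q = Q' ∧ g R = R' := by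
  set d := (Q 0 - P 0) * (R 1 - P 1) - (Q 1 - P 1) * (R 0 - P 0) with hd
  let p0 : Plane →ₗ[ℝ] ℝ := (EuclideanSpace.proj 0 : Plane →L[ℝ] ℝ).toLinearMap
  let p1 : Plane →ₗ[ℝ] ℝ := (EuclideanSpace.proj 1 : Plane →L[ℝ] ℝ).toLinearMap
  have hp0 : ∀ p, p0 p = p 0 := fun p => rfl
  have hp1 : ∀ p, p1 p = p 1 := fun p => rfl
  let X : Plane →ₗ[ℝ] ℝ := d⁻¹ • ((R 1 - P 1) • p0 - (R 0 - P 0) • p1)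
  let Y : Plane →ₗ[ℝ] ℝ := d⁻¹ • ((Q 0 - P 0) • p1 - (Q 1 - P 1) • p0)
  have hX : ∀ p, X p = d⁻¹ * ((R 1 - P 1) * p 0 - (R 0 - P 0) * p 1) := fun p => rfl
  have hY : ∀ p, Y p = d⁻¹ * ((Q 0 - P 0) * p 1 - (Q 1 - P 1) * p 0) := fun p => rfl
  have hXY : ∀ p : Plane, p = X p • (Q - P) + Y p • (R - P) := by
    intro p
    ext i
    fin_cases i
    · simp [hX, hY]; field_simp; rw [hd]; ring
    · simp [hX, hY]; field_simp; rw [hd]; ring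
  let L : Plane →ₗ[ℝ] Plane := X.smulRight (Q' - P') + Y.smulRight (R' - P')
  have hL : ∀ p, L p = X p • (Q' - P') + Y p • (R' - P') := fun p => rfl
  have nu : ‖Q - P‖ = ‖Q' - P'‖ := by
    rw [← dist_eq_norm, ← dist_eq_norm, dist_comm, h3, dist_comm]
  have nv : ‖R - P‖ = ‖R' - P'‖ := by
    rw [← dist_eq_norm, ← dist_eq_norm, dist_comm, h2, dist_comm]
  have nuv : ‖(Q - P) - (R - P)‖ = ‖(Q' - P') - (R' - P')‖ := by
    rw [sub_sub_sub_cancel_right, sub_sub_sub_cancel_right, ← dist_eq_norm, ← dist_eq_norm, h1]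
  have hin : inner ℝ (Q - P) (R - P) = inner ℝ (Q' - P') (R' - P') := by
    have e1 := norm_sub_sq_real (Q - P) (R - P)
    have e2 := norm_sub_sq_real (Q' - P') (R' - P')
    rw [nuv, nu, nv] at e1
    linarith
  have hn : ∀ p, ‖L p‖ = ‖p‖ := by
    intro p
    have e1 : ‖p‖ ^ 2 = ‖X p • (Q - P) + Y p • (R - P)‖ ^ 2 := by rw [← hXY p]
    have e2 : ‖L p‖ ^ 2 = ‖p‖ ^ 2 := by
      rw [e1, hL, norm_add_sq_real, norm_add_sq_real]
      simp only [norm_smul, inner_smul_left, inner_smul_right, nu, nv, hin]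
    exact (sq_eq_sq₀ (norm_nonneg _) (norm_nonneg _)).1 e2
  let LI : Plane →ₗᵢ[ℝ] Plane := ⟨L, hn⟩
  let LE := LI.toLinearIsometryEquiv rfl
  have hLE : ∀ p, LE p = L p := fun p => rfl
  refine ⟨((IsometryEquiv.subRight P).trans LE.toIsometryEquiv).trans
    (IsometryEquiv.addRight P'), ?_, ?_, ?_⟩
  · simp
  · have e1 : X (Q - P) = 1 := by
      rw [hX]; simp; field_simp; rw [hd]; ring
    have e2 : Y (Q - P) = 0 := by
      rw [hY]; simp; right; ring
    have : LE (Q - P) + P' = Q' := by rw [hLE, hL, e1, e2]; simp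
    simpa using this
  · have e1 : X (R - P) = 0 := by
      rw [hX]; simp; right; ring
    have e2 : Y (R - P) = 1 := by
      rw [hY]; simp; field_simp; exact hd.symm
    have : LE (R - P) + P' = R' := by rw [hLE, hL, e1, e2]; simp
    simpa using this

theorem tiles_image {S : Set Plane} {N : ℕ} {p q r : ℝ} (g : Plane ≃ᵢ Plane)
    (h : TilesInto S N p q r) : TilesInto (g '' S) N p q r := by
  obtain ⟨f, Δ, hΔ, hS, hd⟩ := h
  have key : ∀ i, ⇑((f i).trans g) '' Δ = g '' (f i '' Δ) := by
    intro i
    rw [Set.image_image]; rfl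
  refine ⟨fun i => (f i).trans g, Δ, hΔ, ?_, ?_⟩
  · rw [hS, Set.image_iUnion]
    simp only [key]
  · intro i j hij
    have e : ∀ s : Set Plane, interior (g '' s) = g '' interior s := fun s =>
      (g.toHomeomorph.image_interior s).symm
    rw [key, key, e, e, ← Set.image_inter g.injective, hd i j hij, Set.image_empty]

/-- canonical transfer -/
theorem tiles_of_det {p q r p' q' r' : ℝ} {N : ℕ} (P Q R : Plane)
    (hdet : (Q 0 - P 0) * (R 1 - P 1) - (Q 1 - P 1) * (R 0 - P 0) ≠ 0)
    (h1 : dist Q R = p) (h2 : dist P R = q) (h3 : dist P Q = r)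
    (h : TilesInto (convexHull ℝ {P, Q, R}) N p' q' r') (Δ : Set Plane)
    (hΔ : IsTriangle p q r Δ) : TilesInto Δ N p' q' r' := by
  obtain ⟨P', Q', R', e1, e2, e3, rfl⟩ := hΔ
  obtain ⟨g, g1, g2, g3⟩ := sss P Q R P' Q' R' hdet (h1.trans e1.symm) (h2.trans e2.symm)
    (h3.trans e3.symm)
  have := tiles_image g h
  rwa [plane_image_convexHull, Set.image_insert_eq, Set.image_pair, g1, g2, g3] at this

/-- the tile used may be replaced by any congruent nondegenerate one -/
theorem tiles_glue {S T : Set Plane} {M N : ℕ} {p q r : ℝ} (P Q R : Plane)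
    (hdet : (Q 0 - P 0) * (R 1 - P 1) - (Q 1 - P 1) * (R 0 - P 0) ≠ 0)
    (h1 : dist Q R = p) (h2 : dist P R = q) (h3 : dist P Q = r)
    (hS : TilesInto S M p q r) (hT : TilesInto T N p q r)
    (hd : interior S ∩ interior T = ∅) : TilesInto (S ∪ T) (M + N) p q r := by
  have norm : ∀ {S : Set Plane} {M : ℕ}, TilesInto S M p q r →
      ∃ f : Fin M → Plane ≃ᵢ Plane, S = ⋃ i, f i '' convexHull ℝ {P, Q, R} ∧
    ∀ i j : Fin M, i ≠ j → interior (f i '' convexHull ℝ {P, Q, R}) ∩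
      interior (f j '' convexHull ℝ {P, Q, R}) = ∅ := by
    rintro S M ⟨f, Δ, ⟨P', Q', R', e1, e2, e3, rfl⟩, hS, hd⟩
    obtain ⟨g, g1, g2, g3⟩ := sss P Q R P' Q' R' hdet (h1.trans e1.symm) (h2.trans e2.symm)
      (h3.trans e3.symm)
    have hg : g '' convexHull ℝ {P, Q, R} = convexHull ℝ {P', Q', R'} := by
      rw [plane_image_convexHull, Set.image_insert_eq, Set.image_pair, g1, g2, g3]
    have key : ∀ i, ⇑(g.trans (f i)) '' convexHull ℝ {P, Q, R} =
        f i '' convexHull ℝ {P', Q', R'} := by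
      intro i
      rw [← hg, Set.image_image]; rfl
    refine ⟨fun i => g.trans (f i), ?_, ?_⟩
    · simp only [key]; exact hS
    · simp only [key]; exact hd
  obtain ⟨f, hf, hfd⟩ := norm hS
  obtain ⟨g, hg, hgd⟩ := norm hT
  have fS : ∀ i, f i '' convexHull ℝ {P, Q, R} ⊆ S := fun i => by
    rw [hf]; exact Set.subset_iUnion (fun i => f i '' convexHull ℝ {P, Q, R}) i
  have gT : ∀ i, g i '' convexHull ℝ {P, Q, R} ⊆ T := fun i => by
    rw [hg]; exact Set.subset_iUnion (fun i => g i '' convexHull ℝ {P, Q, R}) i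
  refine ⟨Fin.append f g, convexHull ℝ {P, Q, R}, ⟨P, Q, R, h1, h2, h3, rfl⟩, ?_, ?_⟩
  · apply Set.Subset.antisymm
    · rintro x (hx | hx)
      · rw [hf] at hx
        obtain ⟨i, hi⟩ := Set.mem_iUnion.1 hx
        exact Set.mem_iUnion.2 ⟨Fin.castAdd N i, by rwa [Fin.append_left]⟩
      · rw [hg] at hx
        obtain ⟨i, hi⟩ := Set.mem_iUnion.1 hx
        exact Set.mem_iUnion.2 ⟨Fin.natAdd M i, by rwa [Fin.append_right]⟩
    · apply Set.iUnion_subset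
      intro i
      refine Fin.addCases (fun i => ?_) (fun i => ?_) i
      · rw [Fin.append_left]; exact (fS i).trans Set.subset_union_left
      · rw [Fin.append_right]; exact (gT i).trans Set.subset_union_right
  · intro i j
    refine Fin.addCases (fun i => ?_) (fun i => ?_) i <;>
      refine Fin.addCases (fun j => ?_) (fun j => ?_) j
    · intro hij
      rw [Fin.append_left, Fin.append_left]
      exact hfd i j (fun e => hij (by rw [e]))
    · intro _
      rw [Fin.append_left, Fin.append_right]
      exact Set.subset_empty_iff.1 (hd ▸ Set.inter_subset_inter (interior_mono (fS i))
        (interior_mono (gT j)))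
    · intro _
      rw [Fin.append_left, Fin.append_right, Set.inter_comm]
      exact Set.subset_empty_iff.1 (hd ▸ Set.inter_subset_inter (interior_mono (fS j))
        (interior_mono (gT i)))
    · intro hij
      rw [Fin.append_right, Fin.append_right]
      exact hgd i j (fun e => hij (by rw [e]))

theorem sep {S T : Set Plane} (l : Plane →ₗ[ℝ] ℝ) (w : Plane) (hw : l w ≠ 0) (c : ℝ)
    (hS : ∀ p ∈ S, l p ≤ c) (hT : ∀ p ∈ T, c ≤ l p) : interior S ∩ interior T = ∅ := by
  have hs : Function.Surjective l := by
    intro y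
    exact ⟨(y / l w) • w, by simp [hw]⟩
  have ho : IsOpenMap l := l.isOpenMap_of_finiteDimensional hs
  have hcont : Continuous l := l.continuous_of_finiteDimensional
  have e1 : interior S ⊆ l ⁻¹' (Set.Iio c) := by
    rw [← interior_Iic, ho.preimage_interior_eq_interior_preimage hcont]
    exact interior_mono hS
  have e2 : interior T ⊆ l ⁻¹' (Set.Ioi c) := by
    rw [← interior_Ici, ho.preimage_interior_eq_interior_preimage hcont]
    exact interior_mono hT
  apply Set.subset_empty_iff.1
  rintro x ⟨h1, h2⟩
  have h3 : l x < c := e1 h1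
  have h4 : c < l x := e2 h2
  exact lt_asymm h3 h4

/-- oblique coordinates -/
def ob (x y : ℝ) : Plane := pt (x - y / 2) (Real.sqrt 3 / 2 * y)

def obX : Plane →ₗ[ℝ] ℝ :=
  (EuclideanSpace.proj 0 : Plane →L[ℝ] ℝ).toLinearMap +
    (Real.sqrt 3)⁻¹ • (EuclideanSpace.proj 1 : Plane →L[ℝ] ℝ).toLinearMap

def obY : Plane →ₗ[ℝ] ℝ :=
  (2 * (Real.sqrt 3)⁻¹) • (EuclideanSpace.proj 1 : Plane →L[ℝ] ℝ).toLinearMap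

theorem ob_zero (x y : ℝ) : ob x y 0 = x - y / 2 := rfl
theorem ob_one (x y : ℝ) : ob x y 1 = Real.sqrt 3 / 2 * y := rfl
theorem obX_apply (p : Plane) : obX p = p 0 + (Real.sqrt 3)⁻¹ * p 1 := rfl
theorem obY_apply (p : Plane) : obY p = 2 * (Real.sqrt 3)⁻¹ * p 1 := rfl

theorem s3_ne : Real.sqrt 3 ≠ 0 := by positivity

theorem obX_ob (x y : ℝ) : obX (ob x y) = x := by
  have := s3_ne
  rw [obX_apply, ob_zero, ob_one]; field_simp; ring

theorem obY_ob (x y : ℝ) : obY (ob x y) = y := by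
  have := s3_ne
  rw [obY_apply, ob_one]; field_simp

theorem ob_eta (p : Plane) : ob (obX p) (obY p) = p := by
  have := s3_ne
  ext i
  fin_cases i
  · change ob (obX p) (obY p) 0 = p 0
    rw [ob_zero, obX_apply, obY_apply]; ring
  · change ob (obX p) (obY p) 1 = p 1
    rw [ob_one, obY_apply]; field_simp

theorem ob_dist (x y x' y' d : ℝ) (hd : 0 ≤ d)
    (h : d ^ 2 = (x - x') ^ 2 + (y - y') ^ 2 - (x - x') * (y - y')) :
    dist (ob x y) (ob x' y') = d := by
  have h3 : Real.sqrt 3 ^ 2 = 3 := Real.sq_sqrt (by norm_num)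
  rw [EuclideanSpace.dist_eq, Fin.sum_univ_two, ob_zero, ob_one, ob_zero, ob_one,
    Real.dist_eq, Real.dist_eq, sq_abs, sq_abs]
  rw [Real.sqrt_eq_iff_mul_self_eq (by positivity) hd]
  linear_combination -h + h3 * (y - y') ^ 2 / 4

theorem ob_det (x y x' y' x'' y'' : ℝ)
    (h : (x' - x) * (y'' - y) - (y' - y) * (x'' - x) ≠ 0) :
    (ob x' y' 0 - ob x y 0) * (ob x'' y'' 1 - ob x y 1) -
      (ob x' y' 1 - ob x y 1) * (ob x'' y'' 0 - ob x y 0) ≠ 0 := by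
  have := s3_ne
  simp only [ob_zero, ob_one]
  have e : ∀ a b : ℝ, a = Real.sqrt 3 / 2 * b → b ≠ 0 → a ≠ 0 := by
    rintro a b rfl hb; positivity
  refine e _ _ ?_ h
  ring

theorem mem_hull3 (P Q R p : Plane) : p ∈ convexHull ℝ {P, Q, R} ↔
    ∃ x y z : ℝ, 0 ≤ x ∧ 0 ≤ y ∧ 0 ≤ z ∧ x + y + z = 1 ∧ p = x • P + y • Q + z • R := by
  rw [convexHull_insert (by simp), convexHull_pair, mem_convexJoin]
  constructor
  · rintro ⟨_, rfl, q, ⟨y, z, hy, hz, hyz, rfl⟩, ⟨s, t, hs, ht, hst, rfl⟩⟩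
    exact ⟨s, t * y, t * z, hs, by positivity, by positivity,
      by rw [add_assoc, ← mul_add, hyz, mul_one, hst],
      by rw [smul_add, smul_smul, smul_smul, add_assoc]⟩
  · rintro ⟨x, y, z, hx, hy, hz, h, rfl⟩
    by_cases h0 : y + z = 0
    · have : y = 0 := by linarith
      have : z = 0 := by linarith
      have : x = 1 := by linarith
      subst_vars
      exact ⟨P, rfl, Q, left_mem_segment _ _ _, by simpa using left_mem_segment _ _ _⟩
    · refine ⟨P, rfl, (y / (y + z)) • Q + (z / (y + z)) • R,
        ⟨y / (y + z), z / (y + z), by positivity, by positivity, by field_simp, rfl⟩,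
        ⟨x, y + z, hx, by positivity, by linarith, ?_⟩⟩
      rw [smul_add, smul_smul, smul_smul, add_assoc, mul_div_cancel₀ _ h0, mul_div_cancel₀ _ h0]

theorem hull_ob (x y p q : ℝ) (hp : p ≠ 0) (hq : q ≠ 0) :
    convexHull ℝ {ob x (y + q), ob (x + p) y, ob x y} =
      {z | 0 ≤ (obX z - x) / p ∧ 0 ≤ (obY z - y) / q ∧
        (obX z - x) / p + (obY z - y) / q ≤ 1} := by
  ext z
  rw [mem_hull3]
  constructor
  · rintro ⟨s, t, r, hs, ht, hr, h, rfl⟩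
    simp only [Set.mem_ofPred_eq, map_add, map_smul, obX_ob, obY_ob, smul_eq_mul]
    have e1 : (s * x + t * (x + p) + r * x - x) / p = t := by
      field_simp; linear_combination x * h
    have e2 : (s * (y + q) + t * y + r * y - y) / q = s := by
      field_simp; linear_combination y * h
    rw [e1, e2]
    exact ⟨ht, hs, by linarith⟩
  · rintro ⟨h1, h2, h3⟩
    refine ⟨_, _, 1 - (obX z - x) / p - (obY z - y) / q, h2, h1, by linarith, by ring, ?_⟩
    rw [← ob_eta z]
    ext i
    fin_cases i
    · simp [ob_zero, obX_ob, obY_ob]; field_simp; ring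
    · simp [ob_one, obX_ob, obY_ob]; field_simp; ring

theorem tiles_one {p q r : ℝ} {Δ : Set Plane} (h : IsTriangle p q r Δ) : TilesInto Δ 1 p q r := by
  refine ⟨fun _ => IsometryEquiv.refl _, Δ, h, ?_, ?_⟩
  · have e : ⇑(IsometryEquiv.refl Plane) '' Δ = Δ := Set.image_id Δ
    simp only [e, Set.iUnion_const]
  · intro i j hij
    exact absurd (Subsingleton.elim i j) hij

section quad
variable (a b c : ℝ)

theorem ob_glue {a b c : ℝ} (ha : 0 < a) (hb : 0 < b) (hc : 0 < c)
    (h : c ^ 2 = a ^ 2 + b ^ 2 + a * b) {S T U : Set Plane} {M N : ℕ}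
    (l : Plane →ₗ[ℝ] ℝ) (w : Plane) (hw : l w ≠ 0) (k : ℝ)
    (hS : TilesInto S M a b c) (hT : TilesInto T N a b c) (hU : U = S ∪ T)
    (h1 : ∀ p ∈ S, l p ≤ k) (h2 : ∀ p ∈ T, k ≤ l p) : TilesInto U (M + N) a b c := by
  subst hU
  refine tiles_glue (ob 0 b) (ob a 0) (ob 0 0) (ob_det _ _ _ _ _ _ ?_)
    (ob_dist _ _ _ _ _ ha.le ?_) (ob_dist _ _ _ _ _ hb.le ?_) (ob_dist _ _ _ _ _ hc.le ?_)
    hS hT (sep l w hw k h1 h2)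
  · have : a * b ≠ 0 := by positivity
    intro h; apply this; linarith
  · ring
  · ring
  · rw [h]; ring

def xi (a : ℝ) : Plane →ₗ[ℝ] ℝ := a⁻¹ • obX
def eta (b : ℝ) : Plane →ₗ[ℝ] ℝ := b⁻¹ • obY
theorem xi_apply (p : Plane) : xi a p = a⁻¹ * obX p := rfl
theorem eta_apply (p : Plane) : eta b p = b⁻¹ * obY p := rfl

theorem tile_up {a b c : ℝ} (ha : 0 < a) (hb : 0 < b) (hc : 0 < c)
    (h : c ^ 2 = a ^ 2 + b ^ 2 + a * b) (s t : ℝ) :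
    TilesInto {p | s ≤ xi a p ∧ t ≤ eta b p ∧ xi a p + eta b p ≤ s + t + 1} 1 a b c := by
  apply tiles_one
  refine ⟨ob (a * s) (b * t + b), ob (a * s + a) (b * t), ob (a * s) (b * t),
    (ob_dist _ _ _ _ _ ha.le (by ring)), (ob_dist _ _ _ _ _ hb.le (by ring)),
    (ob_dist _ _ _ _ _ hc.le (by rw [h]; ring)), ?_⟩
  rw [hull_ob _ _ _ _ ha.ne' hb.ne']
  ext z
  simp only [Set.mem_ofPred_eq, xi_apply, eta_apply]
  have e1 : (obX z - a * s) / a = a⁻¹ * obX z - s := by field_simp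
  have e2 : (obY z - b * t) / b = b⁻¹ * obY z - t := by field_simp
  rw [e1, e2]
  constructor <;> rintro ⟨h1, h2, h3⟩ <;> refine ⟨?_, ?_, ?_⟩ <;> linarith

theorem tile_down {a b c : ℝ} (ha : 0 < a) (hb : 0 < b) (hc : 0 < c)
    (h : c ^ 2 = a ^ 2 + b ^ 2 + a * b) (s t : ℝ) :
    TilesInto {p | xi a p ≤ s ∧ eta b p ≤ t ∧ s + t - 1 ≤ xi a p + eta b p} 1 a b c := by
  apply tiles_one
  refine ⟨ob (a * s) (b * t + -b), ob (a * s + -a) (b * t), ob (a * s) (b * t),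
    (ob_dist _ _ _ _ _ ha.le (by ring)), (ob_dist _ _ _ _ _ hb.le (by ring)),
    (ob_dist _ _ _ _ _ hc.le (by rw [h]; ring)), ?_⟩
  rw [hull_ob _ _ _ _ (neg_ne_zero.2 ha.ne') (neg_ne_zero.2 hb.ne')]
  ext z
  simp only [Set.mem_ofPred_eq, xi_apply, eta_apply]
  have e1 : (obX z - a * s) / -a = s - a⁻¹ * obX z := by field_simp; ring
  have e2 : (obY z - b * t) / -b = t - b⁻¹ * obY z := by field_simp; ring
  rw [e1, e2]
  constructor <;> rintro ⟨h1, h2, h3⟩ <;> refine ⟨?_, ?_, ?_⟩ <;> linarith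

theorem tile_strip {a b c : ℝ} (ha : 0 < a) (hb : 0 < b) (hc : 0 < c)
    (h : c ^ 2 = a ^ 2 + b ^ 2 + a * b) (n j : ℕ) :
    TilesInto {p | (n : ℝ) ≤ xi a p + eta b p ∧ xi a p + eta b p ≤ n + 1 ∧ 0 ≤ eta b p ∧
      (n : ℝ) - j ≤ xi a p} (2 * j + 1) a b c := by
  induction j with
  | zero =>
    convert tile_up ha hb hc h n 0 using 1
    ext p
    simp only [Set.mem_ofPred_eq, Nat.cast_zero]
    constructor
    · rintro ⟨h1, h2, h3, h4⟩; refine ⟨?_, ?_, ?_⟩ <;> linarith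
    · rintro ⟨h1, h2, h3⟩; refine ⟨?_, ?_, ?_, ?_⟩ <;> linarith
  | succ j ih =>
    have hj : (0 : ℝ) ≤ j := Nat.cast_nonneg j
    have cell : TilesInto {p | (n : ℝ) ≤ xi a p + eta b p ∧ xi a p + eta b p ≤ n + 1 ∧
        (n : ℝ) - j - 1 ≤ xi a p ∧ xi a p ≤ n - j} (1 + 1) a b c := by
      refine ob_glue ha hb hc h (eta b) (ob 0 1) ?_ (j + 1) (tile_down ha hb hc h (n - j) (j + 1))
        (tile_up ha hb hc h (n - j - 1) (j + 1)) ?_ ?_ ?_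
      · rw [eta_apply, obY_ob]; positivity
      · ext p
        simp only [Set.mem_ofPred_eq, Set.mem_union]
        constructor
        · rintro ⟨h1, h2, h3, h4⟩
          rcases le_total (eta b p) (j + 1) with h5 | h5
          · left; refine ⟨?_, ?_, ?_⟩ <;> linarith
          · right; refine ⟨?_, ?_, ?_⟩ <;> linarith
        · rintro (⟨h1, h2, h3⟩ | ⟨h1, h2, h3⟩) <;> refine ⟨?_, ?_, ?_, ?_⟩ <;> linarith
      · rintro p ⟨h1, h2, h3⟩; exact h2
      · rintro p ⟨h1, h2, h3⟩; exact h2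
    have e : 2 * (j + 1) + 1 = (1 + 1) + (2 * j + 1) := by ring
    rw [e]
    refine ob_glue ha hb hc h (xi a) (ob 1 0) ?_ (n - j) cell ih ?_ ?_ ?_
    · rw [xi_apply, obX_ob]; positivity
    · ext p
      simp only [Set.mem_ofPred_eq, Set.mem_union, Nat.cast_add, Nat.cast_one]
      constructor
      · rintro ⟨h1, h2, h3, h4⟩
        rcases le_total (xi a p) (n - j) with h5 | h5
        · left; refine ⟨?_, ?_, ?_, ?_⟩ <;> linarith
        · right; refine ⟨?_, ?_, ?_, ?_⟩ <;> linarith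
      · rintro (⟨h1, h2, h3, h4⟩ | ⟨h1, h2, h3, h4⟩) <;> refine ⟨?_, ?_, ?_, ?_⟩ <;> linarith
    · rintro p ⟨h1, h2, h3, h4⟩; exact h4
    · rintro p ⟨h1, h2, h3, h4⟩; exact h4

theorem tile_tri {a b c : ℝ} (ha : 0 < a) (hb : 0 < b) (hc : 0 < c)
    (h : c ^ 2 = a ^ 2 + b ^ 2 + a * b) (n : ℕ) :
    TilesInto {p | 0 ≤ xi a p ∧ 0 ≤ eta b p ∧ xi a p + eta b p ≤ n + 1} ((n + 1) ^ 2) a b c := by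
  induction n with
  | zero =>
    convert tile_up ha hb hc h 0 0 using 1
    · simp
    · norm_num
  | succ n ih =>
    have hn : (0 : ℝ) ≤ n := Nat.cast_nonneg n
    have e : (n + 1 + 1) ^ 2 = (n + 1) ^ 2 + (2 * (n + 1) + 1) := by ring
    rw [e]
    refine ob_glue ha hb hc h (xi a + eta b) (ob a b) ?_ (n + 1) ih
      (tile_strip ha hb hc h (n + 1) (n + 1)) ?_ ?_ ?_
    · rw [LinearMap.add_apply, xi_apply, obX_ob, eta_apply, obY_ob]; positivity
    · ext p
      simp only [Set.mem_ofPred_eq, Set.mem_union, Nat.cast_add, Nat.cast_one]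
      constructor
      · rintro ⟨h1, h2, h3⟩
        rcases le_total (xi a p + eta b p) (n + 1) with h5 | h5
        · left; refine ⟨?_, ?_, ?_⟩ <;> linarith
        · right; refine ⟨?_, ?_, ?_, ?_⟩ <;> linarith
      · rintro (⟨h1, h2, h3⟩ | ⟨h1, h2, h3, h4⟩) <;> refine ⟨?_, ?_, ?_⟩ <;> linarith
    · rintro p ⟨h1, h2, h3⟩; exact h3
    · rintro p ⟨h1, h2, h3, h4⟩
      rw [LinearMap.add_apply]; push_cast at h1; exact h1

theorem quad_tiling {a b c : ℝ} (ha : 0 < a) (hb : 0 < b) (hc : 0 < c)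
    (h : c ^ 2 = a ^ 2 + b ^ 2 + a * b) (k : ℕ) (hk : 0 < k) (Δ : Set Plane)
    (hΔ : IsTriangle (k * a) (k * b) (k * c) Δ) : TilesInto Δ (k ^ 2) a b c := by
  have hk' : (0 : ℝ) < k := Nat.cast_pos.2 hk
  have hA : 0 < k * a := by positivity
  have hB : 0 < k * b := by positivity
  have hC : 0 < k * c := by positivity
  refine tiles_of_det (ob 0 (0 + k * b)) (ob (0 + k * a) 0) (ob 0 0) (ob_det _ _ _ _ _ _ ?_)
    (ob_dist _ _ _ _ _ hA.le ?_) (ob_dist _ _ _ _ _ hB.le ?_) (ob_dist _ _ _ _ _ hC.le ?_)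
    ?_ Δ hΔ
  · have : (k * a) * (k * b) ≠ 0 := by positivity
    intro h; apply this; linarith
  · ring
  · ring
  · rw [mul_pow, h]; ring
  · rw [hull_ob _ _ _ _ hA.ne' hB.ne']
    obtain ⟨n, rfl⟩ : ∃ n, k = n + 1 := ⟨k - 1, by omega⟩
    convert tile_tri ha hb hc h n using 1
    ext z
    simp only [Set.mem_ofPred_eq, xi_apply, eta_apply]
    push_cast at *
    have e1 : (obX z - 0) / ((n + 1) * a) = (a⁻¹ * obX z) / (n + 1) := by field_simp; ring
    have e2 : (obY z - 0) / ((n + 1) * b) = (b⁻¹ * obY z) / (n + 1) := by field_simp; ring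
    rw [e1, e2, ← add_div, div_le_one hk', le_div_iff₀ hk', le_div_iff₀ hk', zero_mul]

end quad

theorem hull_split (A B C D : Plane) (t : ℝ) (h0 : 0 < t) (h1 : t < 1)
    (hD : D = (1 - t) • B + t • C) :
    convexHull ℝ {A, B, C} = convexHull ℝ {A, B, D} ∪ convexHull ℝ {A, D, C} := by
  have hDm : D ∈ convexHull ℝ {A, B, C} := (mem_hull3 _ _ _ _).2
    ⟨0, 1 - t, t, le_rfl, by linarith, h0.le, by ring, by rw [hD]; simp⟩
  have hA : A ∈ convexHull ℝ {A, B, C} := subset_convexHull ℝ _ (by simp)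
  have hB : B ∈ convexHull ℝ {A, B, C} := subset_convexHull ℝ _ (by simp)
  have hC : C ∈ convexHull ℝ {A, B, C} := subset_convexHull ℝ _ (by simp)
  apply Set.Subset.antisymm
  · intro p hp
    obtain ⟨x, y, z, hx, hy, hz, h, rfl⟩ := (mem_hull3 _ _ _ _).1 hp
    have ht : 0 < 1 - t := by linarith
    rcases le_total (z * (1 - t)) (y * t) with hle | hle
    · left
      refine (mem_hull3 _ _ _ _).2 ⟨x, y - z * (1 - t) / t, z / t, hx, ?_, by positivity, ?_, ?_⟩
      · rw [sub_nonneg, div_le_iff₀ h0]; exact hle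
      · field_simp; linear_combination t * h
      · rw [hD]; match_scalars <;> field_simp <;> ring
    · right
      refine (mem_hull3 _ _ _ _).2 ⟨x, y / (1 - t), z - y * t / (1 - t), hx, by positivity, ?_,
        ?_, ?_⟩
      · rw [sub_nonneg, div_le_iff₀ ht]; exact hle
      · field_simp; linear_combination (1 - t) * h
      · rw [hD]; match_scalars <;> field_simp <;> ring
  · apply Set.union_subset <;> apply convexHull_min _ (convex_convexHull ℝ _) <;>
      rintro x (rfl | rfl | rfl) <;> assumption

theorem hull_le (l : Plane →ₗ[ℝ] ℝ) (k : ℝ) (A B C : Plane) (hA : l A ≤ k) (hB : l B ≤ k)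
    (hC : l C ≤ k) : ∀ p ∈ convexHull ℝ {A, B, C}, l p ≤ k := by
  intro p hp
  refine convexHull_min ?_ (convex_halfSpace_le l.isLinear k) hp
  rintro x (rfl | rfl | rfl) <;> assumption

theorem hull_ge (l : Plane →ₗ[ℝ] ℝ) (k : ℝ) (A B C : Plane) (hA : k ≤ l A) (hB : k ≤ l B)
    (hC : k ≤ l C) : ∀ p ∈ convexHull ℝ {A, B, C}, k ≤ l p := by
  intro p hp
  refine convexHull_min ?_ (convex_halfSpace_ge l.isLinear k) hp
  rintro x (rfl | rfl | rfl) <;> assumption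

theorem stmt17 (a b c : ℕ) (ha : 0 < a) (hb : 0 < b) (hc : 0 < c)
    (hab : Nat.Coprime a b) (hac : Nat.Coprime a c) (hbc : Nat.Coprime b c)
    (h : c ^ 2 = a ^ 2 + b ^ 2 + a * b) (m : ℕ) (hm : 0 < m)
    (heq : TilesInto (EquilateralTri ((m : ℝ) * a * b)) (m ^ 2 * a * b) a b c) :
    ∀ Δ : Set Plane,
      IsTriangle ((m : ℝ) * a * c) ((m : ℝ) * b * (b + 2 * a)) ((m : ℝ) * c * (a + b)) Δ →
      TilesInto Δ (m ^ 2 * (b + 2 * a) * (a + b)) a b c := by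
  have ha' : (0 : ℝ) < a := Nat.cast_pos.2 ha
  have hb' : (0 : ℝ) < b := Nat.cast_pos.2 hb
  have hc' : (0 : ℝ) < c := Nat.cast_pos.2 hc
  have hm' : (0 : ℝ) < m := Nat.cast_pos.2 hm
  have h' : (c : ℝ) ^ 2 = a ^ 2 + b ^ 2 + a * b := by exact_mod_cast h
  -- the equilateral piece
  have heq' : ∀ Δ, IsTriangle ((m : ℝ) * a * b) (m * a * b) (m * a * b) Δ →
      TilesInto Δ (m ^ 2 * a * b) a b c := by
    have e : EquilateralTri ((m : ℝ) * a * b) =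
        convexHull ℝ {ob 0 0, ob (m * a * b) 0, ob (m * a * b) (m * a * b)} := by
      have e1 : pt 0 0 = ob 0 0 := by unfold ob; congr 1 <;> ring
      have e2 : pt ((m : ℝ) * a * b) 0 = ob (m * a * b) 0 := by unfold ob; congr 1 <;> ring
      have e3 : pt ((m : ℝ) * a * b / 2) (m * a * b * Real.sqrt 3 / 2) =
          ob (m * a * b) (m * a * b) := by unfold ob; congr 1 <;> ring
      rw [EquilateralTri, e1, e2, e3]
    rw [e] at heq
    refine tiles_of_det _ _ _ (ob_det _ _ _ _ _ _ ?_) (ob_dist _ _ _ _ _ (by positivity) ?_)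
      (ob_dist _ _ _ _ _ (by positivity) ?_) (ob_dist _ _ _ _ _ (by positivity) ?_) heq
    · have : ((m : ℝ) * a * b) * (m * a * b) ≠ 0 := by positivity
      intro h; apply this; linarith
    all_goals ring
  -- the three pieces in oblique coordinates
  have t1 : TilesInto (convexHull ℝ {ob (m * a * (a + b)) 0, ob 0 (m * b * (a + b)), ob 0 0})
      ((m * (a + b)) ^ 2) a b c := by
    refine quad_tiling ha' hb' hc' h' _ (by positivity) _
      ⟨ob 0 (m * b * (a + b)), ob (m * a * (a + b)) 0, ob 0 0,
        ob_dist _ _ _ _ _ (by positivity) ?_, ob_dist _ _ _ _ _ (by positivity) ?_,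
        ob_dist _ _ _ _ _ (by positivity) ?_, by rw [Set.insert_comm]⟩
    · push_cast; ring
    · push_cast; ring
    · push_cast; rw [mul_pow, h']; ring
  have t2 : TilesInto (convexHull ℝ {ob 0 (-(m * a * b)), ob 0 0, ob (m * a * b) 0})
      (m ^ 2 * a * b) a b c := by
    refine heq' _ ⟨_, _, _, ob_dist _ _ _ _ _ (by positivity) ?_,
      ob_dist _ _ _ _ _ (by positivity) ?_, ob_dist _ _ _ _ _ (by positivity) ?_, rfl⟩
    all_goals ring
  have t3 : TilesInto (convexHull ℝ {ob 0 (-(m * a * b)), ob (m * a * b) 0,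
      ob (m * a * (a + b)) 0}) ((m * a) ^ 2) a b c := by
    refine quad_tiling ha' hb' hc' h' _ (by positivity) _
      ⟨ob 0 (-(m * a * b)), ob (m * a * (a + b)) 0, ob (m * a * b) 0,
        ob_dist _ _ _ _ _ (by positivity) ?_, ob_dist _ _ _ _ _ (by positivity) ?_,
        ob_dist _ _ _ _ _ (by positivity) ?_, by rw [Set.pair_comm]⟩
    · push_cast; ring
    · push_cast; ring
    · push_cast; rw [mul_pow, h']; ring
  have t23 : TilesInto (convexHull ℝ {ob 0 (-(m * a * b)), ob 0 0, ob (m * a * (a + b)) 0})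
      (m ^ 2 * a * b + (m * a) ^ 2) a b c := by
    refine ob_glue ha' hb' hc' h' (obX - obY) (ob 1 0) ?_ (m * a * b) t2 t3
      (hull_split _ _ _ _ (b / (a + b)) (by positivity) ?_ ?_) (hull_le _ _ _ _ _ ?_ ?_ ?_)
      (hull_ge _ _ _ _ _ ?_ ?_ ?_)
    · rw [LinearMap.sub_apply, obX_ob, obY_ob]; norm_num
    · rw [div_lt_one (by positivity)]; linarith
    · ext i
      fin_cases i
      · simp [ob_zero]; field_simp
      · simp [ob_one]
    all_goals rw [LinearMap.sub_apply, obX_ob, obY_ob]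
    · linarith
    · have : 0 < (m : ℝ) * a * b := by positivity
      linarith
    · linarith
    · linarith
    · linarith
    · have : 0 < (m : ℝ) * a * a := by positivity
      nlinarith
  have t : TilesInto (convexHull ℝ {ob (m * a * (a + b)) 0, ob 0 (-(m * a * b)),
      ob 0 (m * b * (a + b))}) (m ^ 2 * (b + 2 * a) * (a + b)) a b c := by
    have en : m ^ 2 * (b + 2 * a) * (a + b) =
        (m ^ 2 * a * b + (m * a) ^ 2) + (m * (a + b)) ^ 2 := by ring
    rw [en]
    have s1 : ({ob 0 (-(m * a * b)), ob 0 0, ob (m * a * (a + b)) 0} : Set Plane) =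
        {ob (m * a * (a + b)) 0, ob 0 (-(m * a * b)), ob 0 0} := by
      rw [Set.pair_comm, Set.insert_comm]
    have s2 : ({ob (m * a * (a + b)) 0, ob 0 (m * b * (a + b)), ob 0 0} : Set Plane) =
        {ob (m * a * (a + b)) 0, ob 0 0, ob 0 (m * b * (a + b))} := by
      rw [Set.pair_comm]
    rw [s1] at t23
    rw [s2] at t1
    have p1 : 0 < (m : ℝ) * a * b := by positivity
    have p2 : 0 < (m : ℝ) * b * (a + b) := by positivity
    refine ob_glue ha' hb' hc' h' obY (ob 0 1) ?_ 0 t23 t1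
      (hull_split _ _ _ _ (a / (b + 2 * a)) (by positivity) ?_ ?_) (hull_le _ _ _ _ _ ?_ ?_ ?_)
      (hull_ge _ _ _ _ _ ?_ ?_ ?_)
    · rw [obY_ob]; norm_num
    · rw [div_lt_one (by positivity)]; linarith
    · ext i
      fin_cases i
      · simp [ob_zero]; field_simp; ring
      · simp [ob_one]; field_simp; ring
    all_goals rw [obY_ob]
    all_goals linarith
  -- transfer
  intro Δ hΔ
  obtain ⟨P, Q, R, d1, d2, d3, rfl⟩ := hΔ
  refine tiles_of_det (p := m * b * (b + 2 * a)) (q := m * c * (a + b)) (r := m * a * c) _ _ _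
    (ob_det _ _ _ _ _ _ ?_) (ob_dist _ _ _ _ _ (by positivity) ?_)
    (ob_dist _ _ _ _ _ (by positivity) ?_) (ob_dist _ _ _ _ _ (by positivity) ?_) t _
    ⟨Q, R, P, by rw [dist_comm, d2], by rw [dist_comm, d3], d1, ?_⟩
  · have : ((m : ℝ) * a * (a + b)) * (m * b * (b + 2 * a)) ≠ 0 := by positivity
    intro h; apply this; linarith
  · ring
  · rw [mul_pow, mul_pow, h']; ring
  · rw [mul_pow, h']; ring
  · rw [Set.insert_comm P Q, Set.pair_comm P R]
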